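/- arXiv:2002.04258 — 2 statements merged into one kernel-verified Lean document; each statement's English description precedes it below -/
import Mathlib

section
/- Let β_D : S × D → [0,∞) and β : S × A → [0,∞). Suppose 0 ≤ c_e(s,a) + c_c(d') + c_x(d',d) ≤ 1 for all s,a,d,d', and let (P_D, P) and (P^k_D, P^k) be two pairs of agent-policy/transition families such that ‖p_d(·|s,t) − p^k_d(·|s,t)‖₁ ≤ min{1, β_D(s,d)} for all d,s,t and ‖p(·|s,a,t) − p^k(·|s,a,t)‖₁ ≤ min{1, β(s,a)} for all s,a,t. Then for every switching policy π, every t ∈ {1,…,L} and every (s,d), writing d' := π_t(s,d), the one-step decomposition holds: V^π_{t|P_D,P}(s,d) − V^π_{t|P^k_D,P^k}(s,d) ≤ Σ_{a∈A} p_{d'}(a|s,t) Σ_{s'∈S} p(s'|s,a,t)·( V^π_{t+1|P_D,P}(s',d') − V^π_{t+1|P^k_D,P^k}(s',d') ) + L·Σ_{a∈A} p_{d'}(a|s,t)·min{1, β(s,a)} + L·min{1, β_D(s,d')}. -/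
/-!
Absorbing the control and switching costs into the sum over actions (the action probabilities sum
to one) writes the value at a time `t` as the average over actions of
`q(a) = c_c + c_x + c_e(s,a) + ∑ s', p(s'|s,a,t) V_{t+1}(s')`. With `W` the value of the perturbed
pair at time `t + 1`, and `q^k` the perturbed `q`,
`∑ p q - ∑ p^k q^k = ∑ p P (V - W) + ∑ p (P - P^k) W + ∑ (p - p^k) q^k`.
Per-step costs in `[0,1]` give `0 ≤ W ≤ L - t` and `0 ≤ q^k ≤ L - t + 1`, both bounded by `L`
(`switchVal_mem_Icc`), so Hölder's inequality (`sum_sub_mul_le`) bounds the last two terms.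
-/

open Finset

/-- `p` is a probability vector on a finite type. -/
def IsProbVec {α : Type*} [Fintype α] (p : α → ℝ) : Prop :=
  (∀ x, 0 ≤ p x) ∧ ∑ x, p x = 1

/-- Value function of a switching policy, defined by backward recursion.
`switchVal PD P ce cc cx π n t s d` is the value at time `t` with `n` remaining
steps (so `V^π_{t|P_D,P}(s,d)` in a horizon-`L` problem is obtained with
`n = L + 1 - t`). -/
noncomputable def switchVal {S A D : Type*} [Fintype S] [Fintype A] [Fintype D]
    (PD : D → S → ℕ → A → ℝ) (P : S → A → ℕ → S → ℝ)
    (ce : S → A → ℝ) (cc : D → ℝ) (cx : D → D → ℝ)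
    (π : ℕ → S → D → D) : ℕ → ℕ → S → D → ℝ
  | 0, _, _, _ => 0
  | n + 1, t, s, d =>
      (cc (π t s d) + cx (π t s d) d) +
        ∑ a, PD (π t s d) s t a *
          (ce s a + ∑ s', P s a t s' * switchVal PD P ce cc cx π n (t + 1) s' (π t s d))

theorem IsProbVec.sum_mul_mem_Icc {α : Type*} [Fintype α] {p : α → ℝ} (hp : IsProbVec p)
    {f : α → ℝ} {M : ℝ} (hf : ∀ x, 0 ≤ f x ∧ f x ≤ M) :
    0 ≤ ∑ x, p x * f x ∧ ∑ x, p x * f x ≤ M := by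
  refine ⟨Finset.sum_nonneg fun x _ => mul_nonneg (hp.1 x) (hf x).1, ?_⟩
  calc ∑ x, p x * f x ≤ ∑ x, p x * M :=
        Finset.sum_le_sum fun x _ => mul_le_mul_of_nonneg_left (hf x).2 (hp.1 x)
    _ = M := by rw [← Finset.sum_mul, hp.2, one_mul]

/-- Hölder's inequality for a difference of weights against a function with values in `[0,M]`. -/
theorem sum_sub_mul_le {α : Type*} [Fintype α] {p q f : α → ℝ} {M b : ℝ} (hM : 0 ≤ M)
    (hf : ∀ x, 0 ≤ f x ∧ f x ≤ M) (hpq : ∑ x, |p x - q x| ≤ b) :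
    ∑ x, (p x - q x) * f x ≤ M * b := by
  calc ∑ x, (p x - q x) * f x ≤ ∑ x, |p x - q x| * M := by
        refine Finset.sum_le_sum fun x _ => ?_
        exact mul_le_mul (le_abs_self _) (hf x).2 (hf x).1 (abs_nonneg _)
    _ = M * ∑ x, |p x - q x| := by rw [← Finset.sum_mul, mul_comm]
    _ ≤ M * b := mul_le_mul_of_nonneg_left hpq hM

/-- The Bellman recursion with the control and switching costs moved inside the average over
actions, where they combine with `ce` to a quantity in `[0,1]`. -/
theorem switchVal_succ_eq {S A D : Type*} [Fintype S] [Fintype A] [Fintype D]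
    (PD : D → S → ℕ → A → ℝ) (P : S → A → ℕ → S → ℝ)
    (ce : S → A → ℝ) (cc : D → ℝ) (cx : D → D → ℝ) (π : ℕ → S → D → D)
    (n t : ℕ) (s : S) (d : D) (h : IsProbVec (PD (π t s d) s t)) :
    switchVal PD P ce cc cx π (n + 1) t s d = ∑ a, PD (π t s d) s t a *
      ((ce s a + cc (π t s d) + cx (π t s d) d)
        + ∑ s', P s a t s' * switchVal PD P ce cc cx π n (t + 1) s' (π t s d)) := by
  have h1 : cc (π t s d) + cx (π t s d) d
      = ∑ a, PD (π t s d) s t a * (cc (π t s d) + cx (π t s d) d) := by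
    rw [← Finset.sum_mul, h.2, one_mul]
  rw [switchVal]
  nth_rewrite 1 [h1]
  rw [← Finset.sum_add_distrib]
  exact Finset.sum_congr rfl fun a _ => by ring

theorem switchVal_mem_Icc {S A D : Type*} [Fintype S] [Fintype A] [Fintype D] (L : ℕ)
    (PD : D → S → ℕ → A → ℝ) (P : S → A → ℕ → S → ℝ)
    (hPD : ∀ d s t, 1 ≤ t → t ≤ L → IsProbVec (PD d s t))
    (hP : ∀ s a t, 1 ≤ t → t ≤ L → IsProbVec (P s a t))
    (ce : S → A → ℝ) (cc : D → ℝ) (cx : D → D → ℝ)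
    (hcost : ∀ s a d d', 0 ≤ ce s a + cc d' + cx d' d ∧ ce s a + cc d' + cx d' d ≤ 1)
    (π : ℕ → S → D → D) (n : ℕ) :
    ∀ t s d, 1 ≤ t → t + n ≤ L + 1 →
      0 ≤ switchVal PD P ce cc cx π n t s d ∧ switchVal PD P ce cc cx π n t s d ≤ n := by
  induction n with
  | zero => intro t s d _ _; simp [switchVal]
  | succ n ih =>
    intro t s d h1 h2
    have hp := hPD (π t s d) s t h1 (by omega)
    rw [switchVal_succ_eq _ _ _ _ _ _ _ _ _ _ hp]
    refine hp.sum_mul_mem_Icc fun a => ?_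
    have hW := (hP s a t h1 (by omega)).sum_mul_mem_Icc
      fun s' => ih (t + 1) s' (π t s d) (by omega) (by omega)
    have hc := hcost s a d (π t s d)
    push_cast
    constructor <;> linarith [hW.1, hW.2, hc.1, hc.2]

/-- one-step decomposition. Under per-step costs in `[0,1]`
and pointwise ℓ¹-closeness of the two pairs of families, for every time
`t ∈ {1,…,L}` and every `(s,d)`, writing `d' := π_t(s,d)`,
`V^π_{t|P_D,P}(s,d) − V^π_{t|P^k_D,P^k}(s,d)` is bounded by the expected next-step
difference plus `L·Σ_a p_{d'}(a|s,t)·min{1,β(s,a)} + L·min{1,β_D(s,d')}`. -/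
theorem one_step_decomposition {S A D : Type*}
    [Fintype S] [Fintype A] [Fintype D] [Nonempty S] [Nonempty A] [Nonempty D]
    (L : ℕ) (hL : 1 ≤ L)
    (βD : S → D → ℝ) (β : S → A → ℝ)
    (hβD : ∀ s d, 0 ≤ βD s d) (hβ : ∀ s a, 0 ≤ β s a)
    (PD PDk : D → S → ℕ → A → ℝ) (P Pk : S → A → ℕ → S → ℝ)
    (hPD : ∀ d s t, 1 ≤ t → t ≤ L → IsProbVec (PD d s t))
    (hP : ∀ s a t, 1 ≤ t → t ≤ L → IsProbVec (P s a t))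
    (hPDk : ∀ d s t, 1 ≤ t → t ≤ L → IsProbVec (PDk d s t))
    (hPk : ∀ s a t, 1 ≤ t → t ≤ L → IsProbVec (Pk s a t))
    (hcloseD : ∀ d s t, 1 ≤ t → t ≤ L →
      ∑ a, |PD d s t a - PDk d s t a| ≤ min 1 (βD s d))
    (hclose : ∀ s a t, 1 ≤ t → t ≤ L →
      ∑ s', |P s a t s' - Pk s a t s'| ≤ min 1 (β s a))
    (ce : S → A → ℝ) (cc : D → ℝ) (cx : D → D → ℝ)
    (hcost : ∀ s a d d', 0 ≤ ce s a + cc d' + cx d' d ∧ ce s a + cc d' + cx d' d ≤ 1)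
    (π : ℕ → S → D → D)
    (t : ℕ) (ht1 : 1 ≤ t) (ht2 : t ≤ L) (s : S) (d : D) :
    switchVal PD P ce cc cx π (L + 1 - t) t s d
        - switchVal PDk Pk ce cc cx π (L + 1 - t) t s d
      ≤ (∑ a, PD (π t s d) s t a * ∑ s', P s a t s' *
            (switchVal PD P ce cc cx π (L - t) (t + 1) s' (π t s d)
              - switchVal PDk Pk ce cc cx π (L - t) (t + 1) s' (π t s d)))
        + (L : ℝ) * ∑ a, PD (π t s d) s t a * min 1 (β s a)
        + (L : ℝ) * min 1 (βD s (π t s d)) := by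
  obtain ⟨n, rfl⟩ : ∃ n, L = t + n := ⟨L - t, by omega⟩
  rw [show t + n + 1 - t = n + 1 by omega, show t + n - t = n by omega]
  have hp := hPD (π t s d) s t ht1 ht2
  rw [switchVal_succ_eq _ _ _ _ _ _ _ _ _ _ hp,
    switchVal_succ_eq _ _ _ _ _ _ _ _ _ _ (hPDk (π t s d) s t ht1 ht2)]
  have hWn : ∀ s', 0 ≤ switchVal PDk Pk ce cc cx π n (t + 1) s' (π t s d) ∧
      switchVal PDk Pk ce cc cx π n (t + 1) s' (π t s d) ≤ n := fun s' =>
    switchVal_mem_Icc (t + n) PDk Pk hPDk hPk ce cc cx hcost π n (t + 1) s' (π t s d)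
      (by omega) (by omega)
  have hcD := hcloseD (π t s d) s t ht1 ht2
  have hcs := fun a => hcost s a d (π t s d)
  generalize π t s d = d' at *
  set V := fun s' => switchVal PD P ce cc cx π n (t + 1) s' d' with hV
  set W := fun s' => switchVal PDk Pk ce cc cx π n (t + 1) s' d' with hW
  set q : A → ℝ := fun a => (ce s a + cc d' + cx d' d) + ∑ s', Pk s a t s' * W s' with hq
  have ht : (1 : ℝ) ≤ t := by exact_mod_cast ht1
  have hn : (0 : ℝ) ≤ n := Nat.cast_nonneg n
  have hL0 : (0 : ℝ) ≤ ((t + n : ℕ) : ℝ) := Nat.cast_nonneg _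
  have hWL : ∀ s', 0 ≤ W s' ∧ W s' ≤ ((t + n : ℕ) : ℝ) := fun s' =>
    ⟨(hWn s').1, (hWn s').2.trans (by push_cast; linarith)⟩
  have hqL : ∀ a, 0 ≤ q a ∧ q a ≤ ((t + n : ℕ) : ℝ) := by
    intro a
    have h := (hPk s a t ht1 ht2).sum_mul_mem_Icc hWn
    have hc := hcs a
    simp only [hq, hW]
    push_cast
    constructor <;> linarith [h.1, h.2, hc.1, hc.2]
  have hagent : ∑ a, (PD d' s t a - PDk d' s t a) * q a
      ≤ ((t + n : ℕ) : ℝ) * min 1 (βD s d') := sum_sub_mul_le hL0 hqL hcD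
  have htrans : ∑ a, PD d' s t a * ∑ s', (P s a t s' - Pk s a t s') * W s'
      ≤ ((t + n : ℕ) : ℝ) * ∑ a, PD d' s t a * min 1 (β s a) := by
    rw [Finset.mul_sum]
    refine Finset.sum_le_sum fun a _ => ?_
    rw [mul_left_comm]
    exact mul_le_mul_of_nonneg_left (sum_sub_mul_le hL0 hWL (hclose s a t ht1 ht2)) (hp.1 a)
  have hdecomp : ∑ a, PD d' s t a * ((ce s a + cc d' + cx d' d) + ∑ s', P s a t s' * V s')
        - ∑ a, PDk d' s t a * q a
      = (∑ a, PD d' s t a * ∑ s', P s a t s' * (V s' - W s'))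
        + (∑ a, PD d' s t a * ∑ s', (P s a t s' - Pk s a t s') * W s')
        + ∑ a, (PD d' s t a - PDk d' s t a) * q a := by
    rw [← Finset.sum_sub_distrib, ← Finset.sum_add_distrib, ← Finset.sum_add_distrib]
    refine Finset.sum_congr rfl fun a _ => ?_
    simp only [hq, mul_sub, sub_mul, Finset.sum_sub_distrib]
    ring
  linarith [hdecomp, hagent, htrans]
end

section
/- Let W be a finite nonempty set, K, H ≥ 1 natural numbers, and w : {1,…,K} × {1,…,H} → W an arbitrary array. Then Σ_{k=1}^{K} Σ_{t=1}^{H} 1[ N_k(w_{k,t}) > H ] / √(N_k(w_{k,t})) ≤ 2√2·√(|W|·K·H). -/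
/-!
Fix a letter `v`, let `N_k` be its episodic count and `c_k ≤ H` its number of occurrences in row
`k`, so that `N_{k+1} = N_k + c_k`. When `N_k > H`, also `N_{k+1} ≤ 2 N_k`, and therefore
`c_k / √N_k ≤ √2 c_k / √N_{k+1} ≤ 2√2 (√N_{k+1} - √N_k)` (`step_bound`). The right-hand side is
nonnegative in any case and telescopes over `k`, so `v` contributes at most `2√2 √N`, with `N` its
total count. The total counts sum to `K H`, and Cauchy–Schwarz over the letters gives the bound.
-/

open Finset

/-- Episodic count: number of occurrences of `v` among the first `k` rows
(episodes) of the array `w`, i.e. among the rows strictly before row `k`. -/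
def epCount {W : Type*} [DecidableEq W] {K H : ℕ}
    (w : Fin K → Fin H → W) (k : Fin K) (v : W) : ℕ :=
  (Finset.univ.filter (fun p : Fin K × Fin H => p.1 < k ∧ w p.1 p.2 = v)).card

/-- The number of occurrences of `v` in the rows of index `< n`, with `n` a natural number, so that
the total count `n = K` is included. -/
def prefixCount {W : Type*} [DecidableEq W] {K H : ℕ}
    (w : Fin K → Fin H → W) (n : ℕ) (v : W) : ℕ :=
  (Finset.univ.filter (fun p : Fin K × Fin H => p.1.val < n ∧ w p.1 p.2 = v)).card

/-- The number of occurrences of `v` in row `k`. -/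
def rowCount {W : Type*} [DecidableEq W] {K H : ℕ}
    (w : Fin K → Fin H → W) (k : Fin K) (v : W) : ℕ :=
  (Finset.univ.filter (fun t : Fin H => w k t = v)).card

section
variable {W : Type*} [DecidableEq W] {K H : ℕ} (w : Fin K → Fin H → W)

lemma epCount_eq_prefixCount (k : Fin K) (v : W) : epCount w k v = prefixCount w k.val v := rfl

lemma rowCount_le (k : Fin K) (v : W) : rowCount w k v ≤ H := by
  simpa [rowCount] using Finset.card_filter_le (Finset.univ : Finset (Fin H)) (fun t => w k t = v)

lemma prefixCount_zero (v : W) : prefixCount w 0 v = 0 := by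
  simp [prefixCount]

lemma prefixCount_succ (k : Fin K) (v : W) :
    prefixCount w (k.val + 1) v = prefixCount w k.val v + rowCount w k v := by
  have hrow : rowCount w k v =
      (Finset.univ.filter (fun p : Fin K × Fin H => p.1 = k ∧ w p.1 p.2 = v)).card := by
    refine Finset.card_bij (fun t _ => (k, t)) ?_ ?_ ?_
    · intro t ht
      simpa using ht
    · intro a _ b _ hab
      simpa using hab
    · rintro ⟨j, t⟩ hp
      simp only [Finset.mem_filter, Finset.mem_univ, true_and] at hp
      obtain ⟨rfl, h⟩ := hp
      exact ⟨t, by simpa using h, rfl⟩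
  rw [hrow, prefixCount, prefixCount, ← Finset.card_union_of_disjoint]
  · congr 1
    ext p
    simp only [Finset.mem_filter, Finset.mem_univ, true_and, Finset.mem_union, Fin.ext_iff]
    rw [Nat.lt_succ_iff_lt_or_eq]
    tauto
  · rw [Finset.disjoint_filter]
    rintro p _ ⟨h, _⟩ ⟨rfl, _⟩
    exact lt_irrefl _ h

lemma sum_prefixCount_total [Fintype W] : ∑ v, prefixCount w K v = K * H := by
  have h := Finset.card_eq_sum_card_fiberwise (s := (Finset.univ : Finset (Fin K × Fin H)))
    (t := (Finset.univ : Finset W)) (f := fun p => w p.1 p.2) (by intro x _; simp)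
  simpa [prefixCount] using h.symm

end

/-- One telescoping step for a fixed letter: `n` occurrences before the row, `c` in the row. -/
lemma step_bound (H n c : ℕ) (hc : c ≤ H) :
    (c : ℝ) * (if H < n then 1 / Real.sqrt (n : ℝ) else 0)
      ≤ 2 * Real.sqrt 2 * (Real.sqrt ((n + c : ℕ) : ℝ) - Real.sqrt (n : ℝ)) := by
  have hmono : Real.sqrt (n : ℝ) ≤ Real.sqrt ((n + c : ℕ) : ℝ) :=
    Real.sqrt_le_sqrt (by push_cast; linarith [(Nat.cast_nonneg c : (0 : ℝ) ≤ c)])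
  split_ifs with h
  · have hn : (0 : ℝ) < n := by exact_mod_cast (by omega : 0 < n)
    have ha := Real.sqrt_pos.2 hn
    have h2 : Real.sqrt ((n + c : ℕ) : ℝ) ≤ Real.sqrt 2 * Real.sqrt (n : ℝ) := by
      rw [← Real.sqrt_mul (by norm_num)]
      exact Real.sqrt_le_sqrt (by exact_mod_cast (by omega : n + c ≤ 2 * n))
    have hsa := Real.sq_sqrt hn.le
    have hsb : Real.sqrt ((n + c : ℕ) : ℝ) ^ 2 = n + c := by
      rw [Real.sq_sqrt (Nat.cast_nonneg _)]
      push_cast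
      rfl
    have hone : (1 : ℝ) ≤ Real.sqrt 2 := Real.one_le_sqrt.2 (by norm_num)
    set a := Real.sqrt (n : ℝ)
    set b := Real.sqrt ((n + c : ℕ) : ℝ)
    rw [mul_one_div, div_le_iff₀ ha]
    -- `c = (b - a) (b + a)`, and both `a` and `b` are at most `√2 a`.
    have hcab : (c : ℝ) = (b - a) * (b + a) := by linear_combination hsa - hsb
    have hab : b + a ≤ 2 * Real.sqrt 2 * a := by nlinarith
    rw [hcab]
    calc (b - a) * (b + a) ≤ (b - a) * (2 * Real.sqrt 2 * a) :=
          mul_le_mul_of_nonneg_left hab (by linarith)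
      _ = 2 * Real.sqrt 2 * (b - a) * a := by ring
  · rw [mul_zero]
    exact mul_nonneg (by positivity) (by linarith)

/-- `Σ_{k,t} 1[N_k(w_{k,t}) > H] / √(N_k(w_{k,t})) ≤ 2√2·√(|W|KH)`. -/
theorem large_count_inv_sqrt_bound {W : Type*} [Fintype W] [Nonempty W] [DecidableEq W]
    (K H : ℕ) (hK : 1 ≤ K) (hH : 1 ≤ H) (w : Fin K → Fin H → W) :
    ∑ k : Fin K, ∑ t : Fin H,
        (if H < epCount w k (w k t) then
          1 / Real.sqrt ((epCount w k (w k t) : ℝ)) else 0)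
      ≤ 2 * Real.sqrt 2 * Real.sqrt ((Fintype.card W : ℝ) * K * H) := by
  have hrow (k : Fin K) (g : W → ℝ) : ∑ t, g (w k t) = ∑ v, (rowCount w k v : ℝ) * g v := by
    rw [← Finset.sum_fiberwise Finset.univ (w k)]
    refine Finset.sum_congr rfl fun v _ => ?_
    rw [Finset.sum_congr rfl (g := fun _ => g v)
      (fun t ht => by rw [(Finset.mem_filter.1 ht).2]), Finset.sum_const, nsmul_eq_mul]
    rfl
  have hletter (v : W) : ∑ k : Fin K, (rowCount w k v : ℝ) *
      (if H < epCount w k v then 1 / Real.sqrt (epCount w k v : ℝ) else 0)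
      ≤ 2 * Real.sqrt 2 * Real.sqrt (prefixCount w K v : ℝ) := by
    have htel : ∑ k : Fin K, (Real.sqrt (prefixCount w (k.val + 1) v : ℝ)
        - Real.sqrt (prefixCount w k.val v : ℝ)) = Real.sqrt (prefixCount w K v : ℝ) := by
      rw [Fin.sum_univ_eq_sum_range (fun n => Real.sqrt (prefixCount w (n + 1) v : ℝ)
        - Real.sqrt (prefixCount w n v : ℝ)) K,
        Finset.sum_range_sub (fun n => Real.sqrt (prefixCount w n v : ℝ)), prefixCount_zero]
      simp
    rw [← htel, Finset.mul_sum]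
    refine Finset.sum_le_sum fun k _ => ?_
    rw [prefixCount_succ, epCount_eq_prefixCount]
    exact step_bound H _ _ (rowCount_le w k v)
  have hcs : ∑ v, Real.sqrt (prefixCount w K v : ℝ)
      ≤ Real.sqrt ((Fintype.card W : ℝ) * K * H) := by
    apply Real.le_sqrt_of_sq_le
    refine (sq_sum_le_card_mul_sum_sq (s := (Finset.univ : Finset W))).trans_eq ?_
    have htotal : ∑ v, (prefixCount w K v : ℝ) = K * H := by
      exact_mod_cast sum_prefixCount_total w
    simp only [Real.sq_sqrt (Nat.cast_nonneg _)]
    rw [htotal, Finset.card_univ, mul_assoc]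
  calc _ = ∑ k : Fin K, ∑ v, (rowCount w k v : ℝ) *
        (if H < epCount w k v then 1 / Real.sqrt (epCount w k v : ℝ) else 0) :=
        Finset.sum_congr rfl fun k _ => hrow k
          (fun v => if H < epCount w k v then 1 / Real.sqrt (epCount w k v : ℝ) else 0)
    _ ≤ ∑ v, 2 * Real.sqrt 2 * Real.sqrt (prefixCount w K v : ℝ) := by
        rw [Finset.sum_comm]
        exact Finset.sum_le_sum fun v _ => hletter v
    _ ≤ _ := by
        rw [← Finset.mul_sum]
        exact mul_le_mul_of_nonneg_left hcs (by positivity)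
end
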